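/- Let 4 ≤ p < q, n = p + q, and suppose 2p < q + 4. Every tree T ∈ 𝒯_n^{p,q} that is isomorphic to none of B_{p,q}^{0,0}, B_{p,q}^{0,1}, B_{p,q}^{2,0}, B_{p,q}^{0,2} satisfies T ≺_s B_{p,q}^{0,2}; that is, in this case B_{p,q}^{0,2} is the unique fourth last tree in the S-order among 𝒯_n^{p,q}. -/

import Mathlib

open SimpleGraph

open scoped Classical in
/-- The adjacency matrix of a simple graph, with real entries. -/
noncomputable def adjMat {V : Type*} [Fintype V] (G : SimpleGraph V) : Matrix V V ℝ :=
  Matrix.of fun a b => if G.Adj a b then 1 else 0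

/-- The `k`-th spectral moment `S_k(G) = tr(A(G)^k)`. -/
noncomputable def spectralMoment {V : Type*} [Fintype V] [DecidableEq V]
    (G : SimpleGraph V) (k : ℕ) : ℝ :=
  Matrix.trace (adjMat G ^ k)

/-- `SLt G₁ G₂` means `G₁ ≺_s G₂`: for some `k` with `1 ≤ k ≤ n - 1`,
`S_i(G₁) = S_i(G₂)` for all `i < k` and `S_k(G₁) < S_k(G₂)`. -/
def SLt {V : Type*} [Fintype V] [DecidableEq V] (G₁ G₂ : SimpleGraph V) : Prop :=
  ∃ k : ℕ, 1 ≤ k ∧ k ≤ Fintype.card V - 1 ∧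
    (∀ i < k, spectralMoment G₁ i = spectralMoment G₂ i) ∧
    spectralMoment G₁ k < spectralMoment G₂ k

/-- The tree `B_{p,q}^{k,l}` on `p + q` vertices: vertex `0 = u` is adjacent to `1 = v`
and to the `q - 1` vertices `2, …, q`; the distinguished neighbor `2` of `u` carries the
`k` pendant leaves `q+1, …, q+k`; the `l` neighbors `3, …, l+2` of `u` carry one pendant
leaf each (`q+k+j` is attached to `j+2` for `1 ≤ j ≤ l`); and `v` carries the
`p - k - l - 1` pendant leaves `q+k+l+1, …, p+q-1`. -/
def BTree (p q k l : ℕ) : SimpleGraph (Fin (p + q)) :=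
  SimpleGraph.fromRel (fun a b =>
    (a.val = 0 ∧ b.val = 1) ∨
    (a.val = 0 ∧ 2 ≤ b.val ∧ b.val ≤ q) ∨
    (a.val = 2 ∧ q + 1 ≤ b.val ∧ b.val ≤ q + k) ∨
    (q + k + 1 ≤ b.val ∧ b.val ≤ q + k + l ∧ a.val = b.val - (q + k) + 2) ∨
    (a.val = 1 ∧ q + k + l + 1 ≤ b.val))

/-- The tree `D_{p,q}^{k,l}` on `p + q` vertices: vertex `1 = v` is adjacent to `0 = u`
and to the `p - 1` vertices `2, …, p`; the distinguished neighbor `2` of `v` carries the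
`k` pendant leaves `p+1, …, p+k`; the `l` neighbors `3, …, l+2` of `v` carry one pendant
leaf each; and `u` carries the `q - k - l - 1` pendant leaves `p+k+l+1, …, p+q-1`. -/
def DTree (p q k l : ℕ) : SimpleGraph (Fin (p + q)) :=
  SimpleGraph.fromRel (fun a b =>
    (a.val = 0 ∧ b.val = 1) ∨
    (a.val = 1 ∧ 2 ≤ b.val ∧ b.val ≤ p) ∨
    (a.val = 2 ∧ p + 1 ≤ b.val ∧ b.val ≤ p + k) ∨
    (p + k + 1 ≤ b.val ∧ b.val ≤ p + k + l ∧ a.val = b.val - (p + k) + 2) ∨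
    (a.val = 0 ∧ p + k + l + 1 ≤ b.val))

/-- `T ∈ 𝒯_{p+q}^{p,q}`: `T` is a tree on `p + q` vertices with a `(p,q)`-bipartition. -/
def TreeBip (p q : ℕ) (G : SimpleGraph (Fin (p + q))) : Prop :=
  G.IsTree ∧ ∃ A : Finset (Fin (p + q)), A.card = p ∧
    ∀ ⦃x y : Fin (p + q)⦄, G.Adj x y → (x ∈ A ↔ y ∉ A)

section Moments

variable {V : Type*} [Fintype V]

/-- Every edge of `G` joins `A` to its complement. -/
def CrossesSet (G : SimpleGraph V) (A : Finset V) : Prop :=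
  ∀ ⦃x y : V⦄, G.Adj x y → (x ∈ A ↔ y ∉ A)

/-- Two distinct vertices of `G` have at most one common neighbor. -/
def AtMostOneCommonNeighbor (G : SimpleGraph V) : Prop :=
  ∀ ⦃x y z w : V⦄, x ≠ y → G.Adj x z → G.Adj y z → G.Adj x w → G.Adj y w → z = w

open scoped Classical in
/-- The degree of a vertex, with classical decidability. -/
noncomputable def vdeg (G : SimpleGraph V) (v : V) : ℕ :=
  (Finset.univ.filter fun w => G.Adj v w).card

open scoped Classical in
lemma adjMat_apply (G : SimpleGraph V) (x y : V) :
    adjMat G x y = if G.Adj x y then 1 else 0 := rfl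

lemma adjMat_comm (G : SimpleGraph V) (x y : V) : adjMat G x y = adjMat G y x := by
  simp only [adjMat_apply]
  congr 1
  exact propext (G.adj_comm x y)

lemma adjMat_mul_self (G : SimpleGraph V) (x y : V) :
    adjMat G x y * adjMat G x y = adjMat G x y := by
  rw [adjMat_apply]; split_ifs <;> simp

lemma sum_adjMat (G : SimpleGraph V) (x : V) : ∑ y, adjMat G x y = vdeg G x := by
  simp [adjMat_apply, vdeg]

variable [DecidableEq V]

lemma adjMat_pow_comm (G : SimpleGraph V) (k : ℕ) (x y : V) :
    (adjMat G ^ k) x y = (adjMat G ^ k) y x := by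
  have h : (adjMat G).transpose = adjMat G := by
    ext a b; exact adjMat_comm G b a
  conv_lhs => rw [← h, ← Matrix.transpose_pow]
  rfl

lemma spectralMoment_add_self (G : SimpleGraph V) (k : ℕ) :
    spectralMoment G (k + k) = ∑ x, ∑ y, (adjMat G ^ k) x y ^ 2 := by
  rw [spectralMoment, pow_add, Matrix.trace]
  refine Finset.sum_congr rfl fun x _ => ?_
  rw [Matrix.diag_apply, Matrix.mul_apply]
  refine Finset.sum_congr rfl fun y _ => ?_
  rw [adjMat_pow_comm G k y x, sq]

lemma adjMat_pow_eq_zero {G : SimpleGraph V} {A : Finset V} (hG : CrossesSet G A) (k : ℕ) :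
    ∀ x y, (adjMat G ^ k) x y ≠ 0 → ((x ∈ A ↔ y ∈ A) ↔ Even k) := by
  induction k with
  | zero =>
    intro x y h
    have : x = y := by
      by_contra hne
      exact h (by simp [hne])
    simp [this]
  | succ k ih =>
    intro x y h
    rw [pow_succ, Matrix.mul_apply] at h
    obtain ⟨z, -, hz⟩ := Finset.exists_ne_zero_of_sum_ne_zero h
    have h1 := ih x z (left_ne_zero_of_mul hz)
    have h2 : G.Adj z y := by
      by_contra hne
      exact right_ne_zero_of_mul hz (by simp [adjMat_apply, hne])
    have h3 := hG h2
    rw [Nat.even_add_one]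
    tauto

lemma spectralMoment_odd {G : SimpleGraph V} {A : Finset V} (hG : CrossesSet G A) {k : ℕ}
    (hk : ¬ Even k) : spectralMoment G k = 0 := by
  refine Finset.sum_eq_zero fun x _ => ?_
  by_contra h
  exact hk ((adjMat_pow_eq_zero hG k x x h).1 Iff.rfl)

lemma spectralMoment_zero (G : SimpleGraph V) : spectralMoment G 0 = Fintype.card V := by
  simp [spectralMoment]

lemma spectralMoment_two (G : SimpleGraph V) :
    spectralMoment G 2 = ∑ x, (vdeg G x : ℝ) := by
  rw [show 2 = 1 + 1 from rfl, spectralMoment_add_self]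
  refine Finset.sum_congr rfl fun x _ => ?_
  rw [← sum_adjMat]
  refine Finset.sum_congr rfl fun y _ => ?_
  rw [pow_one, sq, adjMat_mul_self]

lemma adjMat_sq_apply_self (G : SimpleGraph V) (x : V) :
    (adjMat G ^ 2) x x = vdeg G x := by
  rw [sq, Matrix.mul_apply, ← sum_adjMat]
  refine Finset.sum_congr rfl fun y _ => ?_
  rw [adjMat_comm G y x, adjMat_mul_self]

lemma adjMat_sq_apply_sq {G : SimpleGraph V} (hG : AtMostOneCommonNeighbor G) {x y : V}
    (hxy : x ≠ y) : (adjMat G ^ 2) x y ^ 2 = (adjMat G ^ 2) x y := by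
  by_cases h : ∃ z, G.Adj x z ∧ G.Adj y z
  · obtain ⟨z, hxz, hyz⟩ := h
    have : (adjMat G ^ 2) x y = 1 := by
      rw [sq, Matrix.mul_apply, Finset.sum_eq_single z]
      · simp [adjMat_apply, hxz, hyz.symm]
      · intro w _ hw
        by_contra hne
        simp only [adjMat_apply, mul_ite, mul_one, mul_zero] at hne
        split_ifs at hne with h1 h2
        · exact hw (hG hxy h2 h1.symm hxz hyz)
        · exact hne rfl
        · exact hne rfl
      · simp
    rw [this]; norm_num
  · have : (adjMat G ^ 2) x y = 0 := by
      rw [sq, Matrix.mul_apply]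
      refine Finset.sum_eq_zero fun z _ => ?_
      simp only [adjMat_apply, mul_ite, mul_one, mul_zero]
      split_ifs with h1 h2
      · exact absurd ⟨z, h2, h1.symm⟩ h
      · rfl
      · rfl
    rw [this]; norm_num

lemma sum_adjMat_sq (G : SimpleGraph V) :
    ∑ x, ∑ y, (adjMat G ^ 2) x y = ∑ x, (vdeg G x : ℝ) ^ 2 := by
  simp_rw [sq (adjMat G), Matrix.mul_apply]
  calc ∑ x, ∑ y, ∑ z, adjMat G x z * adjMat G z y
      = ∑ z, ∑ x, ∑ y, adjMat G x z * adjMat G z y := by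
        rw [Finset.sum_congr rfl fun x _ => Finset.sum_comm, Finset.sum_comm]
    _ = _ := by
        refine Finset.sum_congr rfl fun z _ => ?_
        simp_rw [← Finset.mul_sum, sum_adjMat, ← Finset.sum_mul, adjMat_comm G _ z, sum_adjMat, sq]

lemma spectralMoment_four {G : SimpleGraph V} (hG : AtMostOneCommonNeighbor G) :
    spectralMoment G 4 = 2 * ∑ x, (vdeg G x : ℝ) ^ 2 - ∑ x, (vdeg G x : ℝ) := by
  have key : ∀ x, ∑ y, (adjMat G ^ 2) x y ^ 2
      = ∑ y, (adjMat G ^ 2) x y + ((vdeg G x : ℝ) ^ 2 - vdeg G x) := by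
    intro x
    rw [← Finset.add_sum_erase _ _ (Finset.mem_univ x),
      ← Finset.add_sum_erase Finset.univ (fun y => (adjMat G ^ 2) x y) (Finset.mem_univ x),
      adjMat_sq_apply_self, Finset.sum_congr rfl fun y hy =>
        adjMat_sq_apply_sq hG (Finset.ne_of_mem_erase hy).symm]
    ring
  rw [show 4 = 2 + 2 from rfl, spectralMoment_add_self, Finset.sum_congr rfl fun x _ => key x,
    Finset.sum_add_distrib, sum_adjMat_sq, Finset.sum_sub_distrib]
  ring

end Moments

section Hub

variable {V : Type*}

/-- `G` is bipartite with parts `A` and `Aᶜ`, the vertex `u ∈ A` is adjacent to all of `Aᶜ`,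
and every other vertex `a ∈ A` is a leaf attached to `f a`. -/
structure IsHub (G : SimpleGraph V) (A : Finset V) (u : V) (f : V → V) : Prop where
  crosses : CrossesSet G A
  hub_mem : u ∈ A
  parent_notMem : ∀ a ∈ A, f a ∉ A
  adj_iff : ∀ a ∈ A, ∀ b ∉ A, G.Adj a b ↔ a = u ∨ b = f a

/-- The number of vertices of `A` other than `u` that `f` attaches to `b`. -/
def leafCount [DecidableEq V] (A : Finset V) (u : V) (f : V → V) (b : V) : ℕ :=
  (A.filter fun a => a ≠ u ∧ f a = b).card

variable {G : SimpleGraph V} {A : Finset V} {u : V} {f : V → V}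

namespace IsHub

lemma adj_leaf_iff (h : IsHub G A u f) {a b : V} (ha : a ∈ A) (hau : a ≠ u) :
    G.Adj a b ↔ b = f a := by
  constructor
  · intro hab
    exact ((h.adj_iff a ha b ((h.crosses hab).1 ha)).1 hab).resolve_left hau
  · rintro rfl
    exact (h.adj_iff a ha _ (h.parent_notMem a ha)).2 (Or.inr rfl)

lemma adj_hub_iff (h : IsHub G A u f) {b : V} : G.Adj u b ↔ b ∉ A :=
  ⟨fun hab => (h.crosses hab).1 h.hub_mem, fun hb => (h.adj_iff u h.hub_mem b hb).2 (Or.inl rfl)⟩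

lemma atMostOneCommonNeighbor (h : IsHub G A u f) : AtMostOneCommonNeighbor G := by
  have leaf : ∀ a ∈ A, a ≠ u → ∀ z w, G.Adj a z → G.Adj a w → z = w := fun a ha hau z w hz hw =>
    ((h.adj_leaf_iff ha hau).1 hz).trans ((h.adj_leaf_iff ha hau).1 hw).symm
  have center : ∀ x ∉ A, ∀ y ∉ A, x ≠ y → ∀ z, G.Adj x z → G.Adj y z → z = u := by
    intro x hx y hy hxy z hxz hyz
    by_contra hz
    have hzA : z ∈ A := by
      by_contra hzA
      exact hx ((h.crosses hxz).2 hzA)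
    exact hxy (((h.adj_leaf_iff hzA hz).1 hxz.symm).trans ((h.adj_leaf_iff hzA hz).1 hyz.symm).symm)
  intro x y z w hxy hxz hyz hxw hyw
  have c1 := h.crosses hxz
  have c2 := h.crosses hyz
  by_cases hx : x ∈ A
  · by_cases hxu : x = u
    · exact leaf y (c2.2 (c1.1 hx)) (fun hyu => hxy (hxu.trans hyu.symm)) z w hyz hyw
    · exact leaf x hx hxu z w hxz hxw
  · have hy : y ∉ A := fun hy => hx (c1.2 (c2.1 hy))
    exact (center x hx y hy hxy z hxz hyz).trans (center x hx y hy hxy w hxw hyw).symm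

variable [Fintype V] [DecidableEq V]

lemma vdeg_hub (h : IsHub G A u f) : vdeg G u = Aᶜ.card := by
  unfold vdeg
  congr 1
  ext b
  simp [h.adj_hub_iff]

lemma vdeg_leaf (h : IsHub G A u f) {a : V} (ha : a ∈ A) (hau : a ≠ u) : vdeg G a = 1 := by
  unfold vdeg
  rw [Finset.card_eq_one]
  refine ⟨f a, ?_⟩
  ext b
  simp [h.adj_leaf_iff ha hau]

lemma vdeg_notMem (h : IsHub G A u f) {b : V} (hb : b ∉ A) :
    vdeg G b = leafCount A u f b + 1 := by
  unfold vdeg leafCount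
  rw [← Finset.card_insert_of_notMem (a := u) (by simp)]
  congr 1
  ext a
  simp only [Finset.mem_filter, Finset.mem_univ, true_and, Finset.mem_insert]
  rw [G.adj_comm]
  constructor
  · intro hab
    have ha : a ∈ A := (h.crosses hab).2 hb
    by_cases hau : a = u
    · exact Or.inl hau
    · exact Or.inr ⟨ha, hau, ((h.adj_leaf_iff ha hau).1 hab).symm⟩
  · rintro (rfl | ⟨ha, hau, hfa⟩)
    · exact h.adj_hub_iff.2 hb
    · exact (h.adj_leaf_iff ha hau).2 hfa.symm

lemma sum_leafCount (h : IsHub G A u f) : ∑ b ∈ Aᶜ, leafCount A u f b + 1 = A.card := by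
  have h1 : (A.erase u).card = ∑ b ∈ Aᶜ, ((A.erase u).filter fun a => f a = b).card :=
    Finset.card_eq_sum_card_fiberwise fun a ha => by
      have := h.parent_notMem a (Finset.mem_of_mem_erase ha)
      simpa using this
  have h2 : ∀ b, leafCount A u f b = ((A.erase u).filter fun a => f a = b).card := by
    intro b
    unfold leafCount
    congr 1
    ext a
    simp only [Finset.mem_filter, Finset.mem_erase]
    tauto
  simp_rw [h2]
  rw [← h1]
  exact Finset.card_erase_add_one h.hub_mem

lemma sum_mem (h : IsHub G A u f) (g : ℕ → ℕ) :
    ∑ a ∈ A, g (vdeg G a) = g Aᶜ.card + (A.card - 1) * g 1 := by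
  rw [← Finset.add_sum_erase _ _ h.hub_mem, h.vdeg_hub, Finset.sum_congr rfl fun a ha => by
    rw [h.vdeg_leaf (Finset.mem_of_mem_erase ha) (Finset.ne_of_mem_erase ha)]]
  simp [Finset.card_erase_of_mem h.hub_mem]

lemma adjMat_sq_apply (h : IsHub G A u f) {b c : V} (hb : b ∉ A) (hc : c ∉ A) :
    (adjMat G ^ 2) b c = 1 + if b = c then (leafCount A u f c : ℝ) else 0 := by
  split_ifs with hbc
  · subst hbc
    rw [adjMat_sq_apply_self, h.vdeg_notMem hb]
    push_cast; ring
  · have hu : ∀ z ∉ A, G.Adj z u := fun z hz => (h.adj_hub_iff.2 hz).symm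
    rw [sq, Matrix.mul_apply, Finset.sum_eq_single u]
    · simp [adjMat_apply, hu b hb, h.adj_hub_iff.2 hc]
    · intro z _ hz
      by_contra hne
      have h1 : G.Adj b z := by
        by_contra hn
        exact hne (by simp [adjMat_apply, hn])
      have h2 : G.Adj z c := by
        by_contra hn
        exact hne (by simp [adjMat_apply, hn])
      exact hz (h.atMostOneCommonNeighbor hbc h1 h2.symm (hu b hb) (hu c hc))
    · simp

lemma adjMat_cube_apply (h : IsHub G A u f) {a b : V} (ha : a ∈ A) (hb : b ∉ A) :
    (adjMat G ^ 3) a b = vdeg G a + adjMat G a b * leafCount A u f b := by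
  have key : ∀ c, adjMat G a c * (adjMat G ^ 2) c b
      = adjMat G a c + if c = b then adjMat G a c * leafCount A u f b else 0 := by
    intro c
    by_cases hac : G.Adj a c
    · rw [h.adjMat_sq_apply ((h.crosses hac).1 ha) hb]
      split_ifs <;> ring
    · simp [adjMat_apply, hac]
  rw [pow_succ', Matrix.mul_apply, Finset.sum_congr rfl fun c _ => key c, Finset.sum_add_distrib,
    sum_adjMat]
  simp

lemma adjMat_cube_eq_zero (h : IsHub G A u f) {x y : V} (hxy : x ∈ A ↔ y ∈ A) :
    (adjMat G ^ 3) x y = 0 := by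
  by_contra hne
  exact absurd ((adjMat_pow_eq_zero h.crosses 3 x y hne).1 hxy) (by decide)

lemma sum_mem_adjMat (h : IsHub G A u f) {b : V} (hb : b ∉ A) :
    ∑ a ∈ A, adjMat G a b = leafCount A u f b + 1 := by
  have : ∑ a ∈ A, adjMat G a b = ∑ a, adjMat G b a := by
    rw [← Finset.sum_add_sum_compl A (fun a => adjMat G b a)]
    rw [Finset.sum_eq_zero (s := Aᶜ), add_zero]
    · exact Finset.sum_congr rfl fun a _ => adjMat_comm G a b
    · intro c hc
      have : ¬ G.Adj b c := fun hbc => hb ((h.crosses hbc).2 (Finset.mem_compl.1 hc))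
      simp [adjMat_apply, this]
  rw [this, sum_adjMat, h.vdeg_notMem hb]
  push_cast; rfl

lemma vdeg_eq (h : IsHub G A u f) {a : V} (ha : a ∈ A) :
    (vdeg G a : ℝ) = 1 + if a = u then (Aᶜ.card : ℝ) - 1 else 0 := by
  split_ifs with hau
  · rw [hau, h.vdeg_hub]; ring
  · rw [h.vdeg_leaf ha hau]; simp

lemma spectralMoment_six (h : IsHub G A u f) :
    spectralMoment G 6 = 2 * ((Aᶜ.card : ℝ) ^ 3 + 3 * Aᶜ.card * ∑ b ∈ Aᶜ, (leafCount A u f b : ℝ)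
      + 3 * ∑ b ∈ Aᶜ, (leafCount A u f b : ℝ) ^ 2 + ∑ b ∈ Aᶜ, (leafCount A u f b : ℝ) ^ 3) := by
  set q : ℝ := (Aᶜ.card : ℝ) with hq
  set y : V → ℝ := fun b => (leafCount A u f b : ℝ) with hy
  have split : ∑ x, ∑ z, (adjMat G ^ 3) x z ^ 2
      = 2 * ∑ b ∈ Aᶜ, ∑ a ∈ A, (adjMat G ^ 3) a b ^ 2 := by
    have h1 : ∀ x ∈ A, ∑ z, (adjMat G ^ 3) x z ^ 2 = ∑ b ∈ Aᶜ, (adjMat G ^ 3) x b ^ 2 := by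
      intro x hx
      rw [← Finset.sum_add_sum_compl A, Finset.sum_eq_zero (s := A), zero_add]
      intro z hz
      rw [h.adjMat_cube_eq_zero (by tauto)]; norm_num
    have h2 : ∀ x ∈ Aᶜ, ∑ z, (adjMat G ^ 3) x z ^ 2 = ∑ a ∈ A, (adjMat G ^ 3) a x ^ 2 := by
      intro x hx
      rw [Finset.mem_compl] at hx
      rw [← Finset.sum_add_sum_compl A, Finset.sum_eq_zero (s := Aᶜ), add_zero]
      · exact Finset.sum_congr rfl fun a _ => by rw [adjMat_pow_comm]
      · intro z hz
        rw [Finset.mem_compl] at hz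
        rw [h.adjMat_cube_eq_zero (by tauto)]; norm_num
    rw [← Finset.sum_add_sum_compl A, Finset.sum_congr rfl h1, Finset.sum_congr rfl h2,
      Finset.sum_comm]
    ring
  have inner : ∀ b ∈ Aᶜ, ∑ a ∈ A, (adjMat G ^ 3) a b ^ 2
      = (q ^ 2 + (A.card - 1)) + 2 * y b * (q + y b) + y b ^ 2 * (y b + 1) := by
    intro b hb
    rw [Finset.mem_compl] at hb
    have e : ∀ a ∈ A, (adjMat G ^ 3) a b ^ 2 = (1 + if a = u then q ^ 2 - 1 else 0)
        + 2 * y b * (adjMat G a b + if a = u then (q - 1) * adjMat G a b else 0)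
        + y b ^ 2 * adjMat G a b := by
      intro a ha
      rw [h.adjMat_cube_apply ha hb, h.vdeg_eq ha]
      have := adjMat_mul_self G a b
      split_ifs
      · linear_combination (y b ^ 2) * this
      · linear_combination (y b ^ 2) * this
    have hub : adjMat G u b = 1 := by simp [adjMat_apply, h.adj_hub_iff.2 hb]
    rw [Finset.sum_congr rfl e]
    simp only [Finset.sum_add_distrib, ← Finset.mul_sum, h.sum_mem_adjMat hb, Finset.sum_ite_eq',
      h.hub_mem, if_true, hub, Finset.sum_const, nsmul_eq_mul]
    simp only [hy]
    ring
  have total : ∑ b ∈ Aᶜ, y b + 1 = A.card := by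
    have := h.sum_leafCount
    simp only [hy]
    exact_mod_cast this
  rw [show 6 = 3 + 3 from rfl, spectralMoment_add_self, split, Finset.sum_congr rfl inner]
  have e : ∀ b, (q ^ 2 + (A.card - 1)) + 2 * y b * (q + y b) + y b ^ 2 * (y b + 1)
      = (q ^ 2 + (A.card - 1)) + 2 * q * y b + 3 * y b ^ 2 + y b ^ 3 := fun b => by ring
  simp only [e, Finset.sum_add_distrib, ← Finset.mul_sum, Finset.sum_const, nsmul_eq_mul]
  rw [← hq]
  linear_combination (-2 * q) * total

end IsHub

end Hub

section Isomorphism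

lemma exists_equiv_of_card_fiber_eq {V W : Type*} [Fintype V] [DecidableEq W] {l l' : V → W}
    (h : ∀ c, (Finset.univ.filter fun x => l x = c).card
      = (Finset.univ.filter fun x => l' x = c).card) :
    ∃ e : V ≃ V, ∀ x, l' (e x) = l x := by
  have h' : ∀ c, Nonempty ({x // l x = c} ≃ {x // l' x = c}) := fun c => by
    rw [← Fintype.card_eq, Fintype.card_subtype, Fintype.card_subtype, h c]
  exact ⟨Equiv.ofFiberEquiv fun c => (h' c).some, Equiv.ofFiberEquiv_map _⟩

variable {V : Type*} [Fintype V] [DecidableEq V]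

/-- The multiset of leaf counts of the vertices outside `A`. -/
def leafCounts (A : Finset V) (u : V) (f : V → V) : Multiset ℕ :=
  Aᶜ.val.map (leafCount A u f)

variable {G G' : SimpleGraph V} {A A' : Finset V} {u u' : V} {f f' : V → V}

lemma exists_perm_of_leafCounts_eq (hm : leafCounts A u f = leafCounts A' u' f') :
    ∃ s : V ≃ V, ∀ x, (s x ∈ A' ↔ x ∈ A) ∧
      (x ∉ A → leafCount A' u' f' (s x) = leafCount A u f x) := by
  have hc : Aᶜ.card = A'ᶜ.card := by
    simpa [leafCounts] using congrArg Multiset.card hm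
  have hA : A.card = A'.card := by
    have h1 := Finset.card_add_card_compl A
    have h2 := Finset.card_add_card_compl A'
    omega
  obtain ⟨s, hs⟩ := exists_equiv_of_card_fiber_eq
    (l := fun x => if x ∈ A then none else some (leafCount A u f x))
    (l' := fun x => if x ∈ A' then none else some (leafCount A' u' f' x)) (by
      have key : ∀ (A : Finset V) (y : V → ℕ) (n : ℕ),
          (Finset.univ.filter fun x => (if x ∈ A then none else some (y x)) = some n).card
            = (Aᶜ.val.map y).count n := by
        intro A y n
        rw [Multiset.count_map, ← Finset.filter_val, Finset.card_val]
        congr 1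
        ext x
        by_cases hx : x ∈ A <;> simp [hx, eq_comm]
      rintro (_ | n)
      · simpa using hA
      · rw [key, key]
        exact congrArg (Multiset.count n) hm)
  refine ⟨s, fun x => ?_⟩
  have := hs x
  by_cases h1 : x ∈ A <;> by_cases h2 : s x ∈ A' <;> simp_all

lemma IsHub.nonempty_iso (h : IsHub G A u f) (h' : IsHub G' A' u' f')
    (hm : leafCounts A u f = leafCounts A' u' f') : Nonempty (G ≃g G') := by
  obtain ⟨s, hs⟩ := exists_perm_of_leafCounts_eq hm
  obtain ⟨e, he⟩ := exists_equiv_of_card_fiber_eq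
    (l := fun x => if x = u then none else some (x ∈ A, if x ∈ A then s (f x) else s x))
    (l' := fun x => if x = u' then none else some (x ∈ A', if x ∈ A' then f' x else x)) (by
      classical
      rintro (_ | ⟨P, c⟩)
      · simp [Finset.filter_eq']
      · by_cases hP : P
        · have e1 : (Finset.univ.filter fun x => (if x = u then none else
              some (x ∈ A, if x ∈ A then s (f x) else s x)) = some (P, c)).card
              = leafCount A u f (s.symm c) := by
            unfold leafCount
            congr 1
            ext x
            by_cases hx : x = u
            · simp [hx]
            · by_cases hxA : x ∈ A <;> simp [hx, hxA, hP, Equiv.eq_symm_apply]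
          have e2 : (Finset.univ.filter fun x => (if x = u' then none else
              some (x ∈ A', if x ∈ A' then f' x else x)) = some (P, c)).card
              = leafCount A' u' f' c := by
            unfold leafCount
            congr 1
            ext x
            by_cases hx : x = u'
            · simp [hx]
            · by_cases hxA : x ∈ A' <;> simp [hx, hxA, hP]
          rw [e1, e2]
          by_cases hc : c ∈ A'
          · have z : ∀ {A : Finset V} {G : SimpleGraph V} {u f}, IsHub G A u f → ∀ c ∈ A,
                leafCount A u f c = 0 := by
              intro A G u f h c hc
              unfold leafCount
              rw [Finset.card_eq_zero, Finset.filter_eq_empty_iff]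
              rintro a ha ⟨-, rfl⟩
              exact h.parent_notMem a ha hc
            rw [z h' c hc, z h]
            rw [← (hs _).1, Equiv.apply_symm_apply]
            exact hc
          · have := (hs (s.symm c)).2 (by rw [← (hs _).1, Equiv.apply_symm_apply]; exact hc)
            rw [← this, Equiv.apply_symm_apply]
        · have e1 : (Finset.univ.filter fun x => (if x = u then none else
              some (x ∈ A, if x ∈ A then s (f x) else s x)) = some (P, c))
              = if c ∈ A' then ∅ else {s.symm c} := by
            ext x
            by_cases hx : x = u
            · have := h.hub_mem
              have := (hs u).1
              split_ifs with hc
              · simp [hx]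
              · simp only [hx, Finset.mem_filter, Finset.mem_singleton, Equiv.eq_symm_apply]
                simp only [if_true, Finset.mem_univ, true_and, reduceCtorEq, false_iff]
                rintro rfl
                tauto
            · by_cases hxA : x ∈ A
              · have := (hs x).1
                split_ifs with hc
                · simp [hx, hxA, hP]
                · simp only [hx, hxA, Finset.mem_filter, Finset.mem_singleton, Equiv.eq_symm_apply]
                  simp [hP]
                  rintro rfl
                  tauto
              · have := (hs x).1
                split_ifs with hc
                · simp [hx, hxA, hP]
                  rintro rfl
                  tauto
                · simp [hx, hxA, hP, Equiv.eq_symm_apply]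
          have e2 : (Finset.univ.filter fun x => (if x = u' then none else
              some (x ∈ A', if x ∈ A' then f' x else x)) = some (P, c))
              = if c ∈ A' then ∅ else {c} := by
            ext x
            have := h'.hub_mem
            by_cases hx : x = u'
            · split_ifs with hc
              · simp [hx]
              · simp [hx]
                rintro rfl
                tauto
            · by_cases hxA : x ∈ A'
              · split_ifs with hc
                · simp [hx, hxA, hP]
                · simp [hx, hxA, hP]
                  rintro rfl
                  tauto
              · split_ifs with hc
                · simp [hx, hxA, hP]
                  rintro rfl
                  tauto
                · simp [hx, hxA, hP]
          rw [e1, e2]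
          split_ifs <;> simp)
  have hu : ∀ x, e x = u' ↔ x = u := by
    intro x
    have := he x
    constructor
    · intro h2
      by_contra h1
      rw [if_pos h2, if_neg h1] at this
      cases this
    · intro h1
      by_contra h2
      rw [if_neg h2, if_pos h1] at this
      cases this
  have hA : ∀ x, e x ∈ A' ↔ x ∈ A := by
    intro x
    have := he x
    by_cases h1 : x = u
    · rw [(hu x).2 h1, h1]
      exact iff_of_true h'.hub_mem h.hub_mem
    · have h2 : e x ≠ u' := fun h2 => h1 ((hu x).1 h2)
      simp only [h1, h2, if_false, Option.some.injEq, Prod.mk.injEq, eq_iff_iff] at this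
      exact this.1
  have hb : ∀ x ∉ A, e x = s x := by
    intro x hx
    have := he x
    have h1 : x ≠ u := fun h1 => hx (h1 ▸ h.hub_mem)
    have h2 : e x ≠ u' := fun h2 => h1 ((hu x).1 h2)
    simpa [h1, h2, hx, hA x] using this
  have hf : ∀ x ∈ A, x ≠ u → f' (e x) = s (f x) := by
    intro x hx h1
    have := he x
    have h2 : e x ≠ u' := fun h2 => h1 ((hu x).1 h2)
    simpa [h1, h2, hx, hA x] using this
  have cross : ∀ x ∈ A, ∀ y ∉ A, G'.Adj (e x) (e y) ↔ G.Adj x y := by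
    intro x hx y hy
    rw [h.adj_iff x hx y hy, h'.adj_iff _ ((hA x).2 hx) _ (fun hy' => hy ((hA y).1 hy')), hu x]
    by_cases h1 : x = u
    · simp [h1]
    · rw [hf x hx h1, hb y hy, s.apply_eq_iff_eq]
  refine ⟨⟨e, fun {x y} => ?_⟩⟩
  by_cases hx : x ∈ A <;> by_cases hy : y ∈ A
  · exact iff_of_false (fun hadj => (h'.crosses hadj).1 ((hA x).2 hx) ((hA y).2 hy))
      (fun hadj => (h.crosses hadj).1 hx hy)
  · exact cross x hx y hy
  · rw [G'.adj_comm, G.adj_comm]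
    exact cross y hy x hx
  · exact iff_of_false (fun hadj => hx ((hA x).1 ((h'.crosses hadj).2 fun h1 => hy ((hA y).1 h1))))
      (fun hadj => hx ((h.crosses hadj).2 hy))

end Isomorphism

section BTree

lemma card_fin_filter_Ico {n a b : ℕ} (hb : b ≤ n) :
    (Finset.univ.filter fun x : Fin n => a ≤ x.val ∧ x.val < b).card = b - a := by
  rw [← Nat.card_Ico, ← Finset.card_map Fin.valEmbedding]
  congr 1
  ext m
  simp only [Finset.mem_map, Finset.mem_filter, Finset.mem_univ, true_and, Finset.mem_Ico,
    Fin.valEmbedding_apply]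
  constructor
  · rintro ⟨x, hx, rfl⟩
    exact hx
  · intro hm
    exact ⟨⟨m, by omega⟩, hm, rfl⟩

lemma exists_isHub_bTree {p q k l : ℕ} (hq : 5 ≤ q) (hl : l ≤ 2) (hkl : k + l + 1 ≤ p) :
    ∃ A u f, A.card = p ∧ IsHub (BTree p q k l) A u f ∧
      leafCounts A u f = (p - 1 - k - l) ::ₘ k ::ₘ (if 1 ≤ l then 1 else 0) ::ₘ
        (if 2 ≤ l then 1 else 0) ::ₘ Multiset.replicate (q - 4) 0 := by
  let A : Finset (Fin (p + q)) := Finset.univ.filter fun x => x.val = 0 ∨ q < x.val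
  let u : Fin (p + q) := ⟨0, by omega⟩
  let f : Fin (p + q) → Fin (p + q) := fun x =>
    ⟨if x.val ≤ q + k then 2 else if x.val ≤ q + k + l then x.val - (q + k) + 2 else 1, by
      split_ifs <;> omega⟩
  have memA : ∀ x, x ∈ A ↔ x.val = 0 ∨ q < x.val := fun x => by simp [A]
  have hub : IsHub (BTree p q k l) A u f := by
    refine ⟨?_, ?_, ?_, ?_⟩
    · intro x y hxy
      rw [memA, memA]
      simp only [BTree, SimpleGraph.fromRel_adj] at hxy
      omega
    · simp [memA, u]
    · intro a ha
      have hpos : 1 ≤ (f a).val := by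
        simp only [f]
        split_ifs <;> omega
      have hle : (f a).val ≤ q := by
        simp only [f]
        split_ifs <;> omega
      rw [memA]
      omega
    · intro a ha b hb
      rw [memA] at ha hb
      simp only [BTree, SimpleGraph.fromRel_adj, Fin.ext_iff, u, f, ne_eq]
      split_ifs <;> omega
  have cardC : Aᶜ.map Fin.valEmbedding = Finset.Icc 1 q := by
    ext m
    simp only [Finset.mem_map, Finset.mem_compl, memA, Finset.mem_Icc, Fin.valEmbedding_apply]
    constructor
    · rintro ⟨x, hx, rfl⟩
      omega
    · intro hm
      exact ⟨⟨m, by omega⟩, by simp only; omega, rfl⟩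
  let g : ℕ → ℕ := fun n =>
    if n = 1 then p - 1 - k - l else if n = 2 then k else if n ≤ l + 2 then 1 else 0
  have count : ∀ b ∈ Aᶜ, leafCount A u f b = g b.val := by
    intro b hb
    rw [Finset.mem_compl, memA] at hb
    have e : leafCount A u f b = (Finset.univ.filter fun x : Fin (p + q) => q < x.val ∧
        (if x.val ≤ q + k then 2 else if x.val ≤ q + k + l then x.val - (q + k) + 2 else 1)
          = b.val).card := by
      unfold leafCount
      congr 1
      ext x
      simp only [Finset.mem_filter, memA, Finset.mem_univ, true_and, u, f, Fin.ext_iff, ne_eq]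
      constructor
      · rintro ⟨h1, h2, h3⟩
        exact ⟨by omega, h3⟩
      · rintro ⟨h1, h3⟩
        exact ⟨by omega, by omega, h3⟩
    have int : ∀ s t, t ≤ p + q → (∀ x : Fin (p + q), (q < x.val ∧
        (if x.val ≤ q + k then 2 else if x.val ≤ q + k + l then x.val - (q + k) + 2 else 1)
          = b.val) ↔ s ≤ x.val ∧ x.val < t) → leafCount A u f b = t - s := by
      intro s t ht hx
      rw [e, ← card_fin_filter_Ico ht]
      simp only [hx]
    simp only [g]
    split_ifs with h1 h2 h3
    · rw [int (q + k + l + 1) (p + q) le_rfl]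
      · omega
      · intro x
        split_ifs <;> omega
    · rw [int (q + 1) (q + k + 1) (by omega)]
      · omega
      · intro x
        split_ifs <;> omega
    · rw [int (q + k + b.val - 2) (q + k + b.val - 1) (by omega)]
      · omega
      · intro x
        split_ifs <;> omega
    · rw [int 0 0 (by omega)]
      intro x
      split_ifs <;> omega
  refine ⟨A, u, f, ?_, hub, ?_⟩
  · have h1 := Finset.card_add_card_compl A
    rw [← Finset.card_map Fin.valEmbedding (s := Aᶜ), cardC, Nat.card_Icc, Fintype.card_fin] at h1
    omega
  · have e1 : leafCounts A u f = (Finset.Icc 1 q).val.map g := by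
      rw [leafCounts, ← cardC, Finset.map_val, Multiset.map_map]
      exact Multiset.map_congr rfl fun b hb => count b hb
    have e2 : Finset.Icc 1 q = insert 1 (insert 2 (insert 3 (insert 4 (Finset.Icc 5 q)))) := by
      ext m
      simp only [Finset.mem_Icc, Finset.mem_insert]
      omega
    have e3 : (Finset.Icc 5 q).val.map g = Multiset.replicate (q - 4) 0 := by
      rw [Multiset.eq_replicate]
      refine ⟨by simp, fun b hb => ?_⟩
      obtain ⟨m, hm, rfl⟩ := Multiset.mem_map.1 hb
      rw [Finset.mem_val, Finset.mem_Icc] at hm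
      simp only [g]
      split_ifs <;> omega
    rw [e1, e2]
    rw [Finset.insert_val_of_notMem (by simp), Finset.insert_val_of_notMem (by simp),
      Finset.insert_val_of_notMem (by simp), Finset.insert_val_of_notMem (by simp)]
    simp only [Multiset.map_cons, e3]
    simp [g]

end BTree

section Partitions

lemma eq_replicate_zero_of_sum_eq_zero {s : Multiset ℕ} (h : s.sum = 0) :
    s = Multiset.replicate s.card 0 :=
  Multiset.eq_replicate_card.2 (Multiset.sum_eq_zero_iff.1 h)

lemma exists_cons_of_sum_ne_zero {s : Multiset ℕ} (h : s.sum ≠ 0) :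
    ∃ a t, a ≠ 0 ∧ s = a ::ₘ t := by
  rw [ne_eq, Multiset.sum_eq_zero_iff] at h
  push Not at h
  obtain ⟨a, ha, ha0⟩ := h
  obtain ⟨t, ht⟩ := Multiset.exists_cons_of_mem ha
  exact ⟨a, t, ha0, ht⟩

lemma eq_of_mem_of_sum_le {s : Multiset ℕ} {p q m : ℕ} (hq : 5 ≤ q) (hp : 4 ≤ p)
    (hc : s.card = q) (hs : s.sum + 1 = p) (hm : m ∈ s) (hmp : p ≤ m + 3) :
    s = (p - 1) ::ₘ 0 ::ₘ 0 ::ₘ 0 ::ₘ Multiset.replicate (q - 4) 0 ∨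
    s = (p - 2) ::ₘ 0 ::ₘ 1 ::ₘ 0 ::ₘ Multiset.replicate (q - 4) 0 ∨
    s = (p - 3) ::ₘ 2 ::ₘ 0 ::ₘ 0 ::ₘ Multiset.replicate (q - 4) 0 ∨
    s = (p - 3) ::ₘ 0 ::ₘ 1 ::ₘ 1 ::ₘ Multiset.replicate (q - 4) 0 := by
  have rep : ∀ n, 4 ≤ n → Multiset.replicate (n - 1) 0
      = 0 ::ₘ 0 ::ₘ 0 ::ₘ Multiset.replicate (n - 4) (0 : ℕ) := by
    intro n hn
    obtain ⟨r, rfl⟩ := Nat.exists_eq_add_of_le' hn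
    simp [← Multiset.replicate_succ]
  obtain ⟨t, rfl⟩ := Multiset.exists_cons_of_mem hm
  rw [Multiset.card_cons] at hc
  rw [Multiset.sum_cons] at hs
  by_cases h0 : t.sum = 0
  · left
    rw [eq_replicate_zero_of_sum_eq_zero h0, show t.card = q - 1 by omega, rep q (by omega),
      show m = p - 1 by omega]
  obtain ⟨a, t, ha, rfl⟩ := exists_cons_of_sum_ne_zero h0
  rw [Multiset.card_cons] at hc
  rw [Multiset.sum_cons] at hs
  have rep2 : Multiset.replicate (q - 2) 0
      = 0 ::ₘ 0 ::ₘ Multiset.replicate (q - 4) (0 : ℕ) := by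
    obtain ⟨r, rfl⟩ := Nat.exists_eq_add_of_le' (show 4 ≤ q by omega)
    simp [← Multiset.replicate_succ]
  by_cases h1 : t.sum = 0
  · rw [eq_replicate_zero_of_sum_eq_zero h1, show t.card = q - 2 by omega, rep2]
    have : a = 1 ∨ a = 2 := by omega
    rcases this with rfl | rfl
    · right; left
      rw [show m = p - 2 by omega, Multiset.cons_swap 1 0]
    · right; right; left
      rw [show m = p - 3 by omega]
  obtain ⟨b, t, hb, rfl⟩ := exists_cons_of_sum_ne_zero h1
  rw [Multiset.card_cons] at hc
  rw [Multiset.sum_cons] at hs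
  right; right; right
  have h2 : t.sum = 0 := by omega
  rw [eq_replicate_zero_of_sum_eq_zero h2, show t.card = q - 3 by omega, show m = p - 3 by omega,
    show a = 1 by omega, show b = 1 by omega, show q - 3 = (q - 4) + 1 by omega,
    Multiset.replicate_succ, Multiset.cons_swap 1 0 (Multiset.replicate _ _),
    Multiset.cons_swap 1 0]

variable {ι : Type*} {s : Finset ι} {x : ι → ℕ}

lemma sum_sq_le_mul_sum {m : ℕ} (hx : ∀ i ∈ s, x i ≤ m) :
    ∑ j ∈ s, x j ^ 2 ≤ m * ∑ j ∈ s, x j := by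
  rw [Finset.mul_sum]
  exact Finset.sum_le_sum fun i hi => by rw [sq]; exact Nat.mul_le_mul_right _ (hx i hi)

lemma sum_cube_le_mul_sum_sq {m : ℕ} (hx : ∀ i ∈ s, x i ≤ m) :
    ∑ j ∈ s, x j ^ 3 ≤ m * ∑ j ∈ s, x j ^ 2 := by
  rw [Finset.mul_sum]
  exact Finset.sum_le_sum fun i hi => by rw [pow_succ']; exact Nat.mul_le_mul_right _ (hx i hi)

variable [DecidableEq ι]

lemma sum_sq_le_of_mem {i : ι} (hi : i ∈ s) :
    ∑ j ∈ s, x j ^ 2 ≤ x i ^ 2 + (∑ j ∈ s, x j - x i) ^ 2 := by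
  rw [← Finset.add_sum_erase s _ hi, ← Finset.add_sum_erase s x hi, Nat.add_sub_cancel_left]
  exact Nat.add_le_add_left (Finset.sum_sq_le_sq_sum_of_nonneg fun _ _ => Nat.zero_le _) _

lemma sum_sq_le_of_lt_sum {n : ℕ} (hn : ∑ j ∈ s, x j = n + 1) (hx : ∀ i ∈ s, x i ≤ n) :
    ∑ j ∈ s, x j ^ 2 ≤ n ^ 2 + 1 := by
  obtain ⟨i, hi, h0⟩ := Finset.exists_ne_zero_of_sum_ne_zero (show ∑ j ∈ s, x j ≠ 0 by omega)
  have h1 := sum_sq_le_of_mem (x := x) hi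
  rw [hn] at h1
  obtain ⟨a, ha⟩ := Nat.exists_eq_add_of_le (hx i hi)
  obtain ⟨b, hb⟩ := Nat.exists_eq_succ_of_ne_zero h0
  rw [show n + 1 - x i = a + 1 by omega] at h1
  refine h1.trans ?_
  rw [ha, hb]
  have : 0 ≤ a * b := Nat.zero_le _
  simp only [Nat.succ_eq_add_one]
  nlinarith

/-- If the parts of a partition of `r + 3` are at most `r`, the sum of their squares is smaller
than that of the partition `(r + 1, 1, 1)`, except for partitions of `6`, where the sum of
cubes decides. -/
lemma sum_sq_lt_or_of_le {r : ℕ} (hs : ∑ j ∈ s, x j = r + 3) (hx : ∀ i ∈ s, x i ≤ r) :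
    ∑ j ∈ s, x j ^ 2 < (r + 1) ^ 2 + 2 ∨
      ∑ j ∈ s, x j ^ 2 = (r + 1) ^ 2 + 2 ∧ ∑ j ∈ s, x j ^ 3 < (r + 1) ^ 3 + 2 := by
  have hmul := sum_sq_le_mul_sum hx
  have hcub := sum_cube_le_mul_sum_sq hx
  rw [hs] at hmul
  rcases Nat.lt_or_ge r 4 with hr | hr
  · interval_cases r <;> omega
  · left
    by_cases h : ∃ i ∈ s, 3 ≤ x i
    · obtain ⟨i, hi, h3⟩ := h
      have h1 := sum_sq_le_of_mem (x := x) hi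
      rw [hs] at h1
      obtain ⟨a, ha⟩ := Nat.exists_eq_add_of_le (hx i hi)
      obtain ⟨b, hb⟩ := Nat.exists_eq_add_of_le h3
      rw [show r + 3 - x i = a + 3 by omega] at h1
      rw [hb] at h1 ha
      subst ha
      have : 0 ≤ a * b := Nat.zero_le _
      nlinarith
    · push Not at h
      have := sum_sq_le_mul_sum (m := 2) fun i hi => Nat.le_of_lt_succ (h i hi)
      rw [hs] at this
      nlinarith

end Partitions

section Trees

variable {V : Type*} [Fintype V] {G : SimpleGraph V} {A : Finset V}

lemma atMostOneCommonNeighbor_of_isAcyclic {V : Type*} {G : SimpleGraph V} (hG : G.IsAcyclic) :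
    AtMostOneCommonNeighbor G := by
  intro x y z w hxy hxz hyz hxw hyw
  have path : ∀ {z} (h1 : G.Adj x z) (h2 : G.Adj z y),
      (Walk.cons h1 (Walk.cons h2 Walk.nil)).IsPath := by
    intro z h1 h2
    simp [Walk.cons_isPath_iff, h1.ne, h2.ne, hxy]
  have h := (hG.subsingleton_path x y).elim ⟨_, path hxz hyz.symm⟩ ⟨_, path hxw hyw.symm⟩
  have h' := congrArg (fun p : G.Path x y => p.1.snd) h
  simpa using h'

lemma vdeg_eq_degree (G : SimpleGraph V) [DecidableRel G.Adj] (v : V) : vdeg G v = G.degree v := by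
  rw [vdeg, ← G.card_neighborFinset_eq_degree, G.neighborFinset_eq_filter]
  congr

lemma vdeg_pos_of_isTree [Nontrivial V] (hG : G.IsTree) (v : V) : 1 ≤ vdeg G v := by
  classical
  rw [vdeg_eq_degree]
  exact hG.connected.preconnected.degree_pos_of_nontrivial v

/-- The degree of a vertex minus one. -/
noncomputable def excess (G : SimpleGraph V) (v : V) : ℕ := vdeg G v - 1

lemma sum_vdeg_eq (hG : ∀ v, 1 ≤ vdeg G v) :
    ∑ v, vdeg G v = ∑ v, excess G v + Fintype.card V := by
  have : ∀ v, vdeg G v = excess G v + 1 := fun v => (Nat.sub_add_cancel (hG v)).symm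
  simp [this, Finset.sum_add_distrib]

lemma sum_vdeg_sq_eq (hG : ∀ v, 1 ≤ vdeg G v) :
    ∑ v, vdeg G v ^ 2 = ∑ v, excess G v ^ 2 + 2 * ∑ v, excess G v + Fintype.card V := by
  have : ∀ v, vdeg G v = excess G v + 1 := fun v => (Nat.sub_add_cancel (hG v)).symm
  simp [this, add_sq, Finset.sum_add_distrib, Finset.mul_sum]

variable [DecidableEq V]

lemma CrossesSet.compl (h : CrossesSet G A) : CrossesSet G Aᶜ := by
  intro x y hxy
  have := h hxy
  simp only [Finset.mem_compl]
  tauto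

lemma sum_vdeg_of_isTree (hG : G.IsTree) (hA : CrossesSet G A) :
    ∑ a ∈ A, vdeg G a + 1 = Fintype.card V := by
  classical
  have hb : G.IsBipartiteWith (A : Set V) (Aᶜ : Finset V) := by
    refine ⟨by simpa using disjoint_compl_right, fun v w hvw => ?_⟩
    have := hA hvw
    simp only [Finset.mem_coe, Finset.mem_compl]
    tauto
  rw [← hG.card_edgeFinset, ← isBipartiteWith_sum_degrees_eq_card_edges hb]
  simp only [vdeg_eq_degree]

lemma CrossesSet.vdeg_le (hA : CrossesSet G A) {a : V} (ha : a ∈ A) : vdeg G a ≤ Aᶜ.card := by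
  classical
  unfold vdeg
  refine Finset.card_le_card fun b hb => ?_
  rw [Finset.mem_compl]
  exact (hA (Finset.mem_filter.1 hb).2).1 ha

lemma CrossesSet.adj_of_vdeg_eq (hA : CrossesSet G A) {a b : V} (ha : a ∈ A)
    (hd : vdeg G a = Aᶜ.card) (hb : b ∉ A) : G.Adj a b := by
  classical
  have hsub : (Finset.univ.filter fun w => G.Adj a w) ⊆ Aᶜ := fun w hw => by
    rw [Finset.mem_compl]
    exact (hA (Finset.mem_filter.1 hw).2).1 ha
  have heq := Finset.eq_of_subset_of_card_le hsub (by rw [← hd, vdeg])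
  have : b ∈ Finset.univ.filter fun w => G.Adj a w := heq ▸ Finset.mem_compl.2 hb
  exact (Finset.mem_filter.1 this).2

lemma exists_isHub_of_isTree [Nontrivial V] (hG : G.IsTree) (hA : CrossesSet G A) {u : V}
    (hu : u ∈ A) (hd : vdeg G u = Aᶜ.card) : ∃ f, IsHub G A u f := by
  choose f hf using fun v => hG.connected.preconnected.exists_adj_of_nontrivial v
  refine ⟨f, hA, hu, fun a ha => (hA (hf a)).1 ha, fun a ha b hb => ⟨fun hab => ?_, ?_⟩⟩
  · by_cases hau : a = u
    · exact Or.inl hau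
    · exact Or.inr (atMostOneCommonNeighbor_of_isAcyclic hG.isAcyclic hau hab
        (hA.adj_of_vdeg_eq hu hd hb) (hf a)
        (hA.adj_of_vdeg_eq hu hd ((hA (hf a)).1 ha)))
  · rintro (rfl | rfl)
    · exact hA.adj_of_vdeg_eq hu hd hb
    · exact hf a

lemma sum_excess_of_isTree [Nontrivial V] (hG : G.IsTree) (hA : CrossesSet G A) :
    ∑ a ∈ A, excess G a + 1 = Aᶜ.card := by
  have h1 := sum_vdeg_of_isTree hG hA
  have h2 : ∑ a ∈ A, vdeg G a = ∑ a ∈ A, (excess G a + 1) :=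
    Finset.sum_congr rfl fun a _ => (Nat.sub_add_cancel (vdeg_pos_of_isTree hG a)).symm
  rw [h2, Finset.sum_add_distrib, Finset.sum_const, smul_eq_mul, mul_one] at h1
  have h3 := Finset.card_add_card_compl A
  omega

namespace IsHub

variable {u : V} {f : V → V}

lemma excess_notMem (h : IsHub G A u f) {b : V} (hb : b ∉ A) :
    excess G b = leafCount A u f b := by
  rw [excess, h.vdeg_notMem hb, Nat.add_sub_cancel]

lemma sum_excess_pow (h : IsHub G A u f) {k : ℕ} (hk : k ≠ 0) :
    ∑ v, excess G v ^ k = (Aᶜ.card - 1) ^ k + ∑ b ∈ Aᶜ, leafCount A u f b ^ k := by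
  rw [← Finset.sum_add_sum_compl A]
  congr 1
  · have := h.sum_mem fun n => (n - 1) ^ k
    simp only [Nat.sub_self, zero_pow hk, mul_zero, add_zero] at this
    exact this
  · exact Finset.sum_congr rfl fun b hb => by rw [h.excess_notMem (Finset.mem_compl.1 hb)]

lemma vdeg_pos (h : IsHub G A u f) (hA : Aᶜ.Nonempty) (v : V) : 1 ≤ vdeg G v := by
  by_cases hv : v ∈ A
  · by_cases hvu : v = u
    · rw [hvu, h.vdeg_hub]
      exact hA.card_pos
    · rw [h.vdeg_leaf hv hvu]
  · rw [h.vdeg_notMem hv]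
    omega

lemma spectralMoment_six_natCast (h : IsHub G A u f) :
    spectralMoment G 6 = ((2 * (Aᶜ.card ^ 3 + 3 * Aᶜ.card * ∑ b ∈ Aᶜ, leafCount A u f b
      + 3 * ∑ b ∈ Aᶜ, leafCount A u f b ^ 2 + ∑ b ∈ Aᶜ, leafCount A u f b ^ 3) : ℕ) : ℝ) := by
  rw [h.spectralMoment_six]
  push_cast
  rfl

lemma sum_leafCounts_map (A : Finset V) (u : V) (f : V → V) (g : ℕ → ℕ) :
    ((leafCounts A u f).map g).sum = ∑ b ∈ Aᶜ, g (leafCount A u f b) := by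
  rw [leafCounts, Multiset.map_map]
  rfl

end IsHub

lemma sLt_of_excess {H : SimpleGraph V} {A' : Finset V} (hn : 7 ≤ Fintype.card V)
    (hG : CrossesSet G A) (hH : CrossesSet H A')
    (hG1 : AtMostOneCommonNeighbor G) (hH1 : AtMostOneCommonNeighbor H)
    (hGd : ∀ v, 1 ≤ vdeg G v) (hHd : ∀ v, 1 ≤ vdeg H v)
    (hs : ∑ v, excess G v = ∑ v, excess H v)
    (hlt : ∑ v, excess G v ^ 2 < ∑ v, excess H v ^ 2 ∨
      ∑ v, excess G v ^ 2 = ∑ v, excess H v ^ 2 ∧ spectralMoment G 6 < spectralMoment H 6) :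
    SLt G H := by
  have odd : ∀ k, ¬ Even k → spectralMoment G k = spectralMoment H k := fun k hk => by
    rw [spectralMoment_odd hG hk, spectralMoment_odd hH hk]
  have zero : spectralMoment G 0 = spectralMoment H 0 := by
    rw [spectralMoment_zero, spectralMoment_zero]
  have sum : ∑ v, (vdeg G v : ℝ) = ∑ v, (vdeg H v : ℝ) := by
    exact_mod_cast (sum_vdeg_eq hGd).trans ((congrArg (· + _) hs).trans (sum_vdeg_eq hHd).symm)
  have two : spectralMoment G 2 = spectralMoment H 2 := by
    rw [spectralMoment_two, spectralMoment_two, sum]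
  have low : ∀ i < 4, spectralMoment G i = spectralMoment H i := by
    intro i hi
    interval_cases i
    · exact zero
    · exact odd 1 (by decide)
    · exact two
    · exact odd 3 (by decide)
  have sqG := sum_vdeg_sq_eq hGd
  have sqH := sum_vdeg_sq_eq hHd
  rcases hlt with hlt | ⟨heq, hlt⟩
  · refine ⟨4, by omega, by omega, low, ?_⟩
    rw [spectralMoment_four hG1, spectralMoment_four hH1, sum]
    have : (∑ v, (vdeg G v : ℝ) ^ 2) < ∑ v, (vdeg H v : ℝ) ^ 2 := by
      have : ∑ v, vdeg G v ^ 2 < ∑ v, vdeg H v ^ 2 := by omega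
      exact_mod_cast this
    linarith
  · refine ⟨6, by omega, by omega, ?_, hlt⟩
    intro i hi
    rcases Nat.lt_or_ge i 4 with h4 | h4
    · exact low i h4
    · have : i = 4 ∨ i = 5 := by omega
      rcases this with rfl | rfl
      · rw [spectralMoment_four hG1, spectralMoment_four hH1, sum]
        have : (∑ v, (vdeg G v : ℝ) ^ 2) = ∑ v, (vdeg H v : ℝ) ^ 2 := by
          have : ∑ v, vdeg G v ^ 2 = ∑ v, vdeg H v ^ 2 := by omega
          exact_mod_cast this
        rw [this]
      · exact odd 5 (by decide)

end Trees

lemma IsHub.nonempty_iso_bTree {p q : ℕ} (hp : 4 ≤ p) (hpq : p < q)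
    {T : SimpleGraph (Fin (p + q))} {A : Finset (Fin (p + q))} {u : Fin (p + q)}
    {f : Fin (p + q) → Fin (p + q)} (h : IsHub T A u f) (hA : A.card = p) {b : Fin (p + q)}
    (hb : b ∉ A) (hbp : p ≤ leafCount A u f b + 3) :
    Nonempty (T ≃g BTree p q 0 0) ∨ Nonempty (T ≃g BTree p q 0 1) ∨
      Nonempty (T ≃g BTree p q 2 0) ∨ Nonempty (T ≃g BTree p q 0 2) := by
  have hc : (leafCounts A u f).card = q := by
    have h1 := Finset.card_add_card_compl A
    rw [Fintype.card_fin] at h1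
    rw [leafCounts, Multiset.card_map, Finset.card_val]
    omega
  have hs : (leafCounts A u f).sum + 1 = p := h.sum_leafCount.trans hA
  have hm : leafCount A u f b ∈ leafCounts A u f :=
    Multiset.mem_map_of_mem _ (Finset.mem_compl.2 hb)
  have iso : ∀ k l, l ≤ 2 → k + l + 1 ≤ p → leafCounts A u f = (p - 1 - k - l) ::ₘ k ::ₘ
      (if 1 ≤ l then 1 else 0) ::ₘ (if 2 ≤ l then 1 else 0) ::ₘ Multiset.replicate (q - 4) 0 →
      Nonempty (T ≃g BTree p q k l) := by
    intro k l hl hkl heq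
    obtain ⟨A', u', f', -, h', hm'⟩ := exists_isHub_bTree (by omega : 5 ≤ q) hl hkl
    exact h.nonempty_iso h' (heq.trans hm'.symm)
  rcases eq_of_mem_of_sum_le (by omega) hp hc hs hm hbp with heq | heq | heq | heq
  · exact Or.inl (iso 0 0 (by omega) (by omega) (by simpa using heq))
  · exact Or.inr (Or.inl (iso 0 1 (by omega) (by omega) (by simpa [Nat.sub_sub] using heq)))
  · exact Or.inr (Or.inr (Or.inl (iso 2 0 (by omega) (by omega) (by
      simpa [Nat.sub_sub] using heq))))
  · exact Or.inr (Or.inr (Or.inr (iso 0 2 (by omega) (by omega) (by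
      simpa [Nat.sub_sub] using heq))))

/-- For `4 ≤ p < q`, `n = p + q` and `2p < q + 4`, every tree
`T ∈ 𝒯_n^{p,q}` isomorphic to none of `B_{p,q}^{0,0}`, `B_{p,q}^{0,1}`,
`B_{p,q}^{2,0}`, `B_{p,q}^{0,2}` satisfies `T ≺_s B_{p,q}^{0,2}`: in this case
`B_{p,q}^{0,2}` is the unique fourth last tree in the S-order among `𝒯_n^{p,q}`. -/
theorem stmt_9 (p q : ℕ) (hp : 4 ≤ p) (hpq : p < q) (h : 2 * p < q + 4)
    (T : SimpleGraph (Fin (p + q))) (hT : TreeBip p q T)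
    (h0 : ¬ Nonempty (T ≃g BTree p q 0 0))
    (h1 : ¬ Nonempty (T ≃g BTree p q 0 1))
    (h2 : ¬ Nonempty (T ≃g BTree p q 2 0))
    (h3 : ¬ Nonempty (T ≃g BTree p q 0 2)) :
    SLt T (BTree p q 0 2) := by
  obtain ⟨hTree, A, hA, hcr⟩ := hT
  have hcr : CrossesSet T A := hcr
  have : Nontrivial (Fin (p + q)) := Fin.nontrivial_iff_two_le.2 (by omega)
  obtain ⟨r, rfl⟩ := Nat.exists_eq_add_of_le' hp
  obtain ⟨t, rfl⟩ := Nat.exists_eq_add_of_le' (show 2 ≤ q by omega)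
  have hAc : Aᶜ.card = t + 2 := by
    have h1 := Finset.card_add_card_compl A
    rw [Fintype.card_fin] at h1
    omega
  obtain ⟨A', u', f', hA', hub', hm'⟩ := exists_isHub_bTree (p := r + 4) (q := t + 2) (k := 0)
    (l := 2) (by omega) (by omega) (by omega)
  have hAc' : A'ᶜ.card = t + 2 := by
    have h1 := Finset.card_add_card_compl A'
    rw [Fintype.card_fin] at h1
    omega
  have hsum' : ∀ k, k ≠ 0 → ∑ b ∈ A'ᶜ, leafCount A' u' f' b ^ k = (r + 1) ^ k + 2 := by
    intro k hk
    rw [← IsHub.sum_leafCounts_map A' u' f' (· ^ k), hm']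
    simp [hk]
  have hsum1' : ∑ b ∈ A'ᶜ, leafCount A' u' f' b = r + 3 := by
    have := hub'.sum_leafCount
    omega
  have hsA := sum_excess_of_isTree hTree hcr
  have hsB := sum_excess_of_isTree hTree hcr.compl
  rw [compl_compl] at hsB
  refine sLt_of_excess (by rw [Fintype.card_fin]; omega) hcr hub'.crosses
    (atMostOneCommonNeighbor_of_isAcyclic hTree.isAcyclic) hub'.atMostOneCommonNeighbor
    (vdeg_pos_of_isTree hTree) (hub'.vdeg_pos (Finset.card_pos.1 (by omega))) ?_ ?_
  · have h1 := hub'.sum_excess_pow one_ne_zero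
    simp only [pow_one] at h1
    rw [h1, ← Finset.sum_add_sum_compl A]
    omega
  rw [hub'.sum_excess_pow two_ne_zero, hsum' 2 two_ne_zero, hub'.spectralMoment_six_natCast,
    hsum' 2 two_ne_zero, hsum' 3 three_ne_zero, hsum1', hAc', show t + 2 - 1 = t + 1 from rfl]
  by_cases hfull : ∃ u ∈ A, vdeg T u = Aᶜ.card
  · obtain ⟨u, hu, hd⟩ := hfull
    obtain ⟨f, hub⟩ := exists_isHub_of_isTree hTree hcr hu hd
    have hsum : ∑ b ∈ Aᶜ, leafCount A u f b = r + 3 := by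
      have := hub.sum_leafCount
      omega
    have hle : ∀ b ∈ Aᶜ, leafCount A u f b ≤ r := by
      intro b hb
      by_contra hlt
      have := hub.nonempty_iso_bTree hp hpq hA (Finset.mem_compl.1 hb) (by omega)
      tauto
    rw [hub.sum_excess_pow two_ne_zero, hub.spectralMoment_six_natCast, hsum, hAc,
      show t + 2 - 1 = t + 1 from rfl]
    rcases sum_sq_lt_or_of_le hsum hle with hlt | ⟨heq, hlt⟩
    · left
      omega
    · right
      rw [heq]
      refine ⟨rfl, Nat.cast_lt.2 ?_⟩
      omega
  · have hleA : ∀ a ∈ A, excess T a ≤ t := by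
      intro a ha
      have h1 := hcr.vdeg_le ha
      have h2 : vdeg T a ≠ Aᶜ.card := fun h2 => hfull ⟨a, ha, h2⟩
      rw [excess]
      omega
    have hsqA := sum_sq_le_of_lt_sum (by omega) hleA
    rw [← Finset.sum_add_sum_compl A]
    by_cases hfullB : ∃ v ∈ Aᶜ, vdeg T v = A.card
    · obtain ⟨v, hv, hd⟩ := hfullB
      obtain ⟨f, hub⟩ := exists_isHub_of_isTree hTree hcr.compl hv (by rw [hd, compl_compl])
      have hsqB : ∑ b ∈ Aᶜ, excess T b ^ 2 ≤ (r + 3) ^ 2 := by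
        rw [show r + 3 = ∑ b ∈ Aᶜ, excess T b by omega]
        exact Finset.sum_sq_le_sq_sum_of_nonneg fun _ _ => Nat.zero_le _
      have hleaf : ∀ k, ∑ a ∈ A, leafCount Aᶜ v f a ^ k = ∑ a ∈ A, excess T a ^ k := fun k =>
        Finset.sum_congr rfl fun a ha => by rw [hub.excess_notMem (by simpa using ha)]
      have hleaf1 : ∑ a ∈ A, leafCount Aᶜ v f a = t + 1 := by
        have := hleaf 1
        simp only [pow_one] at this
        omega
      have hcube := sum_cube_le_mul_sum_sq hleA
      rw [hub.spectralMoment_six_natCast, compl_compl, hleaf, hleaf, hleaf1, hA]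
      rcases Nat.lt_or_ge (2 * r + 3) t with ht | ht
      · left
        nlinarith
      · obtain rfl : t = 2 * r + 3 := by omega
        rcases Nat.lt_or_ge (∑ a ∈ A, excess T a ^ 2 + ∑ b ∈ Aᶜ, excess T b ^ 2)
          ((2 * r + 3 + 1) ^ 2 + ((r + 1) ^ 2 + 2)) with hlt | hge
        · exact Or.inl hlt
        · right
          have hsq : ∑ a ∈ A, excess T a ^ 2 = (2 * r + 3) ^ 2 + 1 := by nlinarith
          refine ⟨by nlinarith, Nat.cast_lt.2 ?_⟩
          rw [hsq] at hcube ⊢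
          nlinarith
    · left
      have hleB : ∀ b ∈ Aᶜ, excess T b ≤ r + 2 := by
        intro b hb
        have h1 := hcr.compl.vdeg_le hb
        rw [compl_compl] at h1
        have h2 : vdeg T b ≠ A.card := fun h2 => hfullB ⟨b, hb, h2⟩
        rw [excess]
        omega
      have hsqB := sum_sq_le_of_lt_sum (by omega) hleB
      nlinarith
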